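/- arXiv:1707.02580 — 2 statements merged into one kernel-verified Lean document; each statement's English description precedes it below -/
import Mathlib

section
/- Let (g,[p]) be a restricted Lie algebra over k, let X ⊆ Gr_2(g)^{V(g)} be a closed subset, put V_X := ∪_{v ∈ X} v, and let φ : P(V_X) → P^m be a morphism of varieties. Then: (1) the map deg_φ : X → ℕ₀ sending v to the degree deg(φ|_{P(v)}) of the restriction of φ to the projective line P(v) is locally constant; (2) if X is connected, then deg_φ is constant. -/
noncomputable section

namespace ElemAb

variable (p : ℕ) (k : Type) [Field k]

/-- The algebra of polynomial functions on a `k`-vector space `V`: the subalgebra of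
`V → k` generated by the linear functionals. -/
def polyFuns (V : Type) [AddCommGroup V] [Module k V] : Subalgebra k (V → k) :=
  Algebra.adjoin k {f : V → k | ∃ φ : V →ₗ[k] k, f = ⇑φ}

/-- The Zariski topology on a `k`-vector space: the topology generated by the complements of
zero sets of polynomial functions. -/
def zar (V : Type) [AddCommGroup V] [Module k V] : TopologicalSpace V :=
  TopologicalSpace.generateFrom {U | ∃ f ∈ polyFuns k V, U = {x | f x ≠ 0}}

variable (L : Type) [LieRing L] [LieAlgebra k L]

/-- A restricted Lie algebra structure (`p`-map) on the Lie algebra `L`:  a map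
`x ↦ x^[p]` having the formal properties of a `p`-th power map, namely
`(t • x)^[p] = t^p • x^[p]`, additivity on commuting elements (and, in general, additivity up
to a correction term lying in the subalgebra generated by the two elements), and
`ad (x^[p]) = (ad x)^p`. -/
structure pStructure : Type where
  pmap : L → L
  pmap_smul : ∀ (t : k) (x : L), pmap (t • x) = t ^ p • pmap x
  pmap_add_of_comm : ∀ x y : L, ⁅x, y⁆ = 0 → pmap (x + y) = pmap x + pmap y
  pmap_add_mem : ∀ x y : L, pmap (x + y) - pmap x - pmap y ∈ LieSubalgebra.lieSpan k L {x, y}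
  ad_pmap : ∀ x y : L, ⁅pmap x, y⁆ = ((LieAlgebra.ad k L x) ^ p) y

variable {p k L}

/-- The (restricted) nullcone `V(g) = {x | x^[p] = 0}`. -/
def pStructure.null (P : pStructure p k L) : Set L := {x | P.pmap x = 0}

/-- A submodule is an elementary abelian subalgebra if it is abelian (hence a subalgebra) and
the `p`-map vanishes on it. -/
def pStructure.IsElemAbelian (P : pStructure p k L) (e : Submodule k L) : Prop :=
  (∀ x ∈ e, ∀ y ∈ e, ⁅x, y⁆ = (0 : L)) ∧ ∀ x ∈ e, P.pmap x = 0

/-- `E(r, g)`: the `r`-dimensional elementary abelian subalgebras contained in the carrier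
set `g` (take `g = Set.univ` for the whole algebra), as a set of submodules. -/
def pStructure.elemSet (P : pStructure p k L) (g : Set L) (r : ℕ) : Set (Submodule k L) :=
  {e | (e : Set L) ⊆ g ∧ Module.finrank k ↥e = r ∧ P.IsElemAbelian e}

/-- Pairs of linearly independent vectors spanning a member of a given collection `C` of
two-dimensional subspaces. -/
def planePairs (C : Set (Submodule k L)) : Set (L × L) :=
  {z | LinearIndependent k ![z.1, z.2] ∧ Submodule.span k (Set.range ![z.1, z.2]) ∈ C}

/-- The canonical (quotient) map from spanning pairs to planes. -/
def planeMk (C : Set (Submodule k L)) (z : planePairs C) : ↥C :=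
  ⟨Submodule.span k (Set.range ![z.val.1, z.val.2]), z.prop.2⟩

/-- The Zariski topology on a collection of two-dimensional subspaces (e.g. `E(2,g)` or
`Gr₂(g)^{V(g)}`), defined as the quotient topology induced from the Zariski topology on the
variety of spanning pairs. -/
def planeTop (C : Set (Submodule k L)) : TopologicalSpace ↥C :=
  TopologicalSpace.coinduced (planeMk C)
    (TopologicalSpace.induced Subtype.val (zar k (L × L)))

/-- The statement that the projective variety `E(2, g)` is connected (the empty space counts
as connected). -/
def pStructure.EIsConnected (P : pStructure p k L) (g : Set L) : Prop :=
  @IsPreconnected ↥(P.elemSet g 2) (planeTop (P.elemSet g 2)) Set.univ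

/-- `N_i(g) = {x | (ad x)^i = 0}`. -/
def Ncal (i : ℕ) : Set L := {x | (LieAlgebra.ad k L x) ^ i = 0}

/-- The truncated exponential `exp x = ∑_{i<p} (ad x)^i / i!`. -/
def expAd (x : L) : Module.End k L :=
  ∑ i ∈ Finset.range p, (i.factorial : k)⁻¹ • ((LieAlgebra.ad k L x) ^ i)

/-- Automorphisms of the Lie algebra `L` (as linear endomorphisms). -/
def IsLieAut (f : Module.End k L) : Prop :=
  Function.Bijective f ∧ ∀ x y : L, f ⁅x, y⁆ = ⁅f x, f y⁆

/-- Automorphisms of the restricted Lie algebra `(L, [p])`, i.e. automorphisms commuting with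
the `p`-map (the group `Aut_p(g)`). -/
def pStructure.IspAut (P : pStructure p k L) (f : Module.End k L) : Prop :=
  IsLieAut f ∧ ∀ x : L, f (P.pmap x) = P.pmap (f x)

/-- A restricted Lie algebra is admissible if `N₃(g) ⊆ V(g)` and `exp(N₃(g)) ⊆ Aut_p(g)`. -/
def pStructure.IsAdmissible (P : pStructure p k L) : Prop :=
  Ncal (k := k) 3 ⊆ P.null ∧ ∀ x ∈ Ncal (k := k) (L := L) 3, P.IspAut (expAd (p := p) x)


section Proj

variable (k)

/-- The Zariski topology on the projective space `P(V)`, as the quotient topology from the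
punctured affine space. -/
def projTop (V : Type) [AddCommGroup V] [Module k V] : TopologicalSpace (Projectivization k V) :=
  TopologicalSpace.coinduced (Projectivization.mk' k)
    (TopologicalSpace.induced Subtype.val (zar k V))

variable {k}

variable {V : Type} [AddCommGroup V] [Module k V] [FiniteDimensional k V]

/-- Evaluation of a polynomial at the coordinates of `x` with respect to a fixed basis:
this realizes `MvPolynomial (Fin (dim V)) k` as the algebra `S(V^*)` of polynomial functions
on `V`. -/
def polyEval (f : MvPolynomial (Fin (Module.finrank k V)) k) (x : V) : k :=
  MvPolynomial.eval (fun i => (Module.finBasis k V).repr x i) f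

/-- The restriction homomorphism `S(V^*) → S(W^*)` for a subspace `W ⊆ V` (in coordinates). -/
def resW (W : Submodule k V) :
    MvPolynomial (Fin (Module.finrank k V)) k →ₐ[k]
      MvPolynomial (Fin (Module.finrank k ↥W)) k :=
  MvPolynomial.aeval (fun i => ∑ j : Fin (Module.finrank k ↥W),
    MvPolynomial.C ((Module.finBasis k V).repr ((Module.finBasis k ↥W j : ↥W) : V) i) *
      MvPolynomial.X j)

variable (k) in
/-- The subset of `P(V)` determined by a subset `S ⊆ V`, as a type. -/
def projOf (S : Set V) : Type :=
  {q : Projectivization k V // ∃ x, ∃ hx : x ≠ 0, x ∈ S ∧ Projectivization.mk k x hx = q}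

/-- `φ : P(S) → P^m` is a morphism of varieties: locally around every point it is given by a
system of homogeneous polynomials of a common degree. -/
def IsMorphismOn (S : Set V) (m : ℕ)
    (φ : projOf k S → Projectivization k (Fin (m + 1) → k)) : Prop :=
  ∀ q0 : projOf k S, ∃ U : Set (projOf k S),
    @IsOpen _ (TopologicalSpace.induced Subtype.val (projTop k V)) U ∧ q0 ∈ U ∧
    ∃ (d : ℕ) (F : Fin (m + 1) → MvPolynomial (Fin (Module.finrank k V)) k),
      (∀ i, (F i).IsHomogeneous d) ∧
      ∀ (x : V) (hx : x ≠ 0) (q : projOf k S), q ∈ U →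
        q.1 = Projectivization.mk k x hx →
        ∃ hF : (fun i => polyEval (F i) x) ≠ 0,
          φ q = Projectivization.mk k (fun i => polyEval (F i) x) hF

/-- The degree `deg (φ|_{P(v)})` of the restriction of `φ` to the projective line of a
two-dimensional subspace `v`: the common degree of a reduced homogeneous defining system of
`φ|_{P(v)}` in the coordinates of a basis of `v`. -/
noncomputable def planeDeg {S : Set V} (m : ℕ)
    (φ : projOf k S → Projectivization k (Fin (m + 1) → k)) (v : Submodule k V) : ℕ :=
  sSup {d | ∃ u w : V, u ∈ v ∧ w ∈ v ∧ LinearIndependent k ![u, w] ∧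
    ∃ F : Fin (m + 1) → MvPolynomial (Fin 2) k,
      (∀ i, (F i).IsHomogeneous d) ∧
      (∀ h : MvPolynomial (Fin 2) k, (∀ i, h ∣ F i) → IsUnit h) ∧
      ∀ (s t : k) (hx : s • u + t • w ≠ 0) (q : projOf k S),
        q.1 = Projectivization.mk k (s • u + t • w) hx →
        ∃ hF : (fun i => MvPolynomial.eval (![s, t] : Fin 2 → k) (F i)) ≠ 0,
          φ q = Projectivization.mk k (fun i => MvPolynomial.eval (![s, t] : Fin 2 → k) (F i)) hF}

end Proj

/-- `Gr₂(g)^{V(g)}`: the two-dimensional subspaces of `g` contained in the nullcone. -/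
def pStructure.gr2V (P : pStructure p k L) : Set (Submodule k L) :=
  {v | Module.finrank k ↥v = 2 ∧ (v : Set L) ⊆ P.null}

end ElemAb

namespace ElemAb

section LineTuples

open Polynomial

variable {K ι κ : Type} [Field K]

/-- A tuple of polynomials of degree at most `d`, viewed as binary forms of degree `d`, has no
common zero on the projective line. -/
structure IsBasePointFree (d : ℕ) (f : ι → K[X]) : Prop where
  natDegree_le : ∀ i, (f i).natDegree ≤ d
  eval_ne_zero : ∀ t, ∃ i, (f i).eval t ≠ 0
  coeff_ne_zero : ∃ i, (f i).coeff d ≠ 0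

lemma IsBasePointFree.exists_sum_mul_eq_one [IsAlgClosed K] [Fintype ι] {d : ℕ} {f : ι → K[X]}
    (hf : IsBasePointFree d f) : ∃ a : ι → K[X], ∑ i, a i * f i = 1 := by
  rw [← Ideal.mem_span_range_iff_exists_fun, ← Ideal.eq_top_iff_one]
  set I := Ideal.span (Set.range f)
  obtain ⟨g, hg⟩ := (IsPrincipalIdealRing.principal I).principal
  have hmem : ∀ i, g ∣ f i := fun i => by
    rw [← Ideal.mem_span_singleton]
    change f i ∈ Submodule.span _ _
    rw [← hg]
    exact Ideal.subset_span ⟨i, rfl⟩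
  have hroot : ∀ t, g.eval t ≠ 0 := fun t ht => by
    obtain ⟨i, hi⟩ := hf.eval_ne_zero t
    exact hi (eval_eq_zero_of_dvd_of_eval_eq_zero (hmem i) ht)
  have hdeg : g.degree = 0 := by
    by_contra h
    obtain ⟨t, ht⟩ := IsAlgClosed.exists_root g h
    exact hroot t ht
  rw [hg]
  exact Ideal.span_singleton_eq_top.2 (isUnit_iff_degree_eq_zero.2 hdeg)

lemma IsBasePointFree.lt_of_cross_eq [IsAlgClosed K] [Fintype ι] {e n : ℕ} {g f : ι → K[X]}
    (hg : IsBasePointFree e g) (hf : f ≠ 0) (hdeg : ∀ i, f i ∈ degreeLT K n)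
    (h : ∀ i l, f i * g l = f l * g i) : e < n := by
  obtain ⟨a, ha⟩ := hg.exists_sum_mul_eq_one
  have hfg : ∀ l, f l = (∑ i, a i * f i) * g l := fun l => by
    calc f l = f l * ∑ i, a i * g i := by rw [ha, mul_one]
      _ = (∑ i, a i * f i) * g l := by
        rw [Finset.mul_sum, Finset.sum_mul]
        refine Finset.sum_congr rfl fun i _ => ?_
        linear_combination -(a i) * h i l
  set c := ∑ i, a i * f i
  have hc : c ≠ 0 := fun hc => hf (funext fun l => by rw [hfg l, hc, zero_mul]; rfl)
  obtain ⟨l, hl⟩ := hg.coeff_ne_zero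
  have hgl : g l ≠ 0 := fun h0 => hl (by rw [h0, coeff_zero])
  have h1 : e ≤ (g l).natDegree := le_natDegree_of_ne_zero hl
  have h2 : (f l).natDegree = c.natDegree + (g l).natDegree := by
    rw [hfg l, natDegree_mul hc hgl]
  have h3 : f l ≠ 0 := by rw [hfg l]; exact mul_ne_zero hc hgl
  have h4 := mem_degreeLT.1 (hdeg l)
  rw [degree_eq_natDegree h3] at h4
  have h5 : (f l).natDegree < n := by exact_mod_cast h4
  omega

lemma IsBasePointFree.ne_zero {e : ℕ} {g : ι → K[X]} (hg : IsBasePointFree e g) : g ≠ 0 := by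
  obtain ⟨l, hl⟩ := hg.coeff_ne_zero
  intro h
  exact hl (by simp [h])

lemma IsBasePointFree.mem_degreeLT {e n : ℕ} {g : ι → K[X]} (hg : IsBasePointFree e g)
    (hn : e < n) (i : ι) : g i ∈ degreeLT K n :=
  Polynomial.mem_degreeLT.2 <| (degree_le_natDegree.trans
    (by exact_mod_cast hg.natDegree_le i)).trans_lt (by exact_mod_cast hn : (e : WithBot ℕ) < n)

lemma IsBasePointFree.degree_unique [IsAlgClosed K] [Fintype ι] {e d : ℕ} {g f : ι → K[X]}
    (hg : IsBasePointFree e g) (hf : IsBasePointFree d f)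
    (h : ∀ i l, f i * g l = f l * g i) : d = e := by
  have h1 := hg.lt_of_cross_eq hf.ne_zero (hf.mem_degreeLT (Nat.lt_succ_self d)) h
  have h2 := hf.lt_of_cross_eq hg.ne_zero (hg.mem_degreeLT (Nat.lt_succ_self e))
    (fun i l => by linear_combination h l i)
  omega

/-- A base point free matrix of rank one of binary forms is the outer product of two base point
free tuples. -/
lemma IsBasePointFree.exists_outer_product [Fintype ι] {d : ℕ} {m : κ → ι → K[X]}
    (hm : IsBasePointFree d (fun x : κ × ι => m x.1 x.2))
    (hrk : ∀ j j' l l', m j l * m j' l' = m j l' * m j' l) :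
    ∃ (e e' : ℕ) (g : ι → K[X]) (h : κ → K[X]), e + e' = d ∧ IsBasePointFree e g ∧
      IsBasePointFree e' h ∧ ∀ j l, m j l = h j * g l := by
  obtain ⟨⟨j₀, l₀⟩, h0⟩ := hm.coeff_ne_zero
  obtain ⟨q, hq⟩ := (IsPrincipalIdealRing.principal
    (Ideal.span (Set.range (m j₀)))).principal
  have hdvd : ∀ l, q ∣ m j₀ l := fun l => by
    rw [← Ideal.mem_span_singleton]
    change m j₀ l ∈ Submodule.span _ _
    rw [← hq]
    exact Ideal.subset_span ⟨l, rfl⟩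
  choose g hg using hdvd
  have hqmem : q ∈ Ideal.span (Set.range (m j₀)) := by
    rw [hq]; exact Ideal.mem_span_singleton_self q
  obtain ⟨a, ha⟩ := Ideal.mem_span_range_iff_exists_fun.1 hqmem
  have hq0 : q ≠ 0 := fun hq0 => h0 (by simp [hg, hq0])
  set h : κ → K[X] := fun j => ∑ l, a l * m j l
  have hmul : ∀ j l, m j l = h j * g l := fun j l => by
    apply mul_left_cancel₀ hq0
    calc q * m j l = ∑ l', a l' * m j l' * m j₀ l := by
          rw [← ha, Finset.sum_mul]
          refine Finset.sum_congr rfl fun l' _ => ?_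
          linear_combination a l' * hrk j j₀ l l'
      _ = q * (h j * g l) := by rw [← Finset.sum_mul, hg]; ring
  have hh0 : h j₀ ≠ 0 := fun hz => h0 (by simp [hmul, hz])
  have hg0 : g l₀ ≠ 0 := fun hz => h0 (by simp [hmul, hz])
  have hd : (h j₀).natDegree + (g l₀).natDegree = d := by
    rw [← natDegree_mul hh0 hg0, ← hmul]
    exact le_antisymm (hm.natDegree_le (j₀, l₀)) (le_natDegree_of_ne_zero h0)
  refine ⟨(g l₀).natDegree, (h j₀).natDegree, g, h, by omega, ⟨fun l => ?_, fun t => ?_, l₀, ?_⟩,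
    ⟨fun j => ?_, fun t => ?_, j₀, ?_⟩, hmul⟩
  · by_cases hz : g l = 0
    · simp [hz]
    · have := hm.natDegree_le (j₀, l)
      simp only [hmul, natDegree_mul hh0 hz] at this
      omega
  · obtain ⟨⟨j, l⟩, hjl⟩ := hm.eval_ne_zero t
    refine ⟨l, fun hz => hjl ?_⟩
    simp [hmul, hz]
  · exact leadingCoeff_ne_zero.2 hg0
  · by_cases hz : h j = 0
    · simp [hz]
    · have := hm.natDegree_le (j, l₀)
      simp only [hmul, natDegree_mul hz hg0] at this
      omega
  · obtain ⟨⟨j, l⟩, hjl⟩ := hm.eval_ne_zero t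
    refine ⟨j, fun hz => hjl ?_⟩
    simp [hmul, hz]
  · exact leadingCoeff_ne_zero.2 hh0

lemma eval_homogenize_one_zero (f : K[X]) (d : ℕ) :
    MvPolynomial.eval ![1, 0] (f.homogenize d) = f.coeff d := by
  rw [homogenize, map_sum, Finset.sum_eq_single (d, 0)]
  · simp [MvPolynomial.eval_monomial, Finsupp.prod_fintype, Finsupp.update_eq_add_single]
  · rintro ⟨a, b⟩ hab hne
    have hb : b ≠ 0 := by
      rintro rfl
      simp_all
    simp [MvPolynomial.eval_monomial, Finsupp.prod_fintype, Finsupp.update_eq_add_single, hb]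
  · simp

lemma eval_homogenize_one_right {f : K[X]} {d : ℕ} (hf : f.natDegree ≤ d) (s : K) :
    MvPolynomial.eval ![s, 1] (f.homogenize d) = f.eval s :=
  eval₂_homogenize_of_eq_one hf (RingHom.id K) ![s, 1] rfl

lemma eval_smul_of_isHomogeneous {σ : Type} {F : MvPolynomial σ K} {d : ℕ}
    (hF : F.IsHomogeneous d) (c : K) (x : σ → K) :
    MvPolynomial.eval (c • x) F = c ^ d * MvPolynomial.eval x F := by
  simp only [MvPolynomial.eval_eq, Finset.mul_sum]
  refine Finset.sum_congr rfl fun δ hδ => ?_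
  have hdeg : ∑ i ∈ δ.support, δ i = d := by
    simpa [Finsupp.degree_apply] using hF.degree_eq_sum_deg_support hδ |>.symm
  simp only [Pi.smul_apply, smul_eq_mul, mul_pow, Finset.prod_mul_distrib, Finset.prod_pow_eq_pow_sum,
    hdeg]
  ring

lemma IsBasePointFree.eval_homogenize_ne_zero {d : ℕ} {f : ι → K[X]} (hf : IsBasePointFree d f)
    {s t : K} (hst : s ≠ 0 ∨ t ≠ 0) :
    (fun i => MvPolynomial.eval ![s, t] ((f i).homogenize d)) ≠ 0 := by
  by_cases ht : t = 0
  · subst ht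
    have hs : s ≠ 0 := by simpa using hst
    obtain ⟨i, hi⟩ := hf.coeff_ne_zero
    intro h
    have h1 := congrFun h i
    have h2 : (![s, 0] : Fin 2 → K) = s • ![1, 0] := by simp
    simp only [h2, eval_smul_of_isHomogeneous (isHomogeneous_homogenize (f i)),
      eval_homogenize_one_zero, Pi.zero_apply] at h1
    exact mul_ne_zero (pow_ne_zero _ hs) hi h1
  · obtain ⟨i, hi⟩ := hf.eval_ne_zero (s / t)
    intro h
    have h1 := congrFun h i
    have h2 : (![s, t] : Fin 2 → K) = t • ![s / t, 1] := by simp [mul_div_cancel₀ _ ht]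
    simp only [h2, eval_smul_of_isHomogeneous (isHomogeneous_homogenize (f i)),
      eval_homogenize_one_right (hf.natDegree_le i), Pi.zero_apply] at h1
    exact mul_ne_zero (pow_ne_zero _ ht) hi h1

lemma isBasePointFree_of_eval_homogenize_ne_zero {d : ℕ} {f : ι → K[X]}
    (hdeg : ∀ i, (f i).natDegree ≤ d)
    (h : ∀ s t : K, s ≠ 0 ∨ t ≠ 0 →
      (fun i => MvPolynomial.eval ![s, t] ((f i).homogenize d)) ≠ 0) :
    IsBasePointFree d f := by
  refine ⟨hdeg, fun t => ?_, ?_⟩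
  · obtain ⟨i, hi⟩ := Function.ne_iff.1 (h t 1 (Or.inr one_ne_zero))
    exact ⟨i, by simpa [eval_homogenize_one_right (hdeg i)] using hi⟩
  · obtain ⟨i, hi⟩ := Function.ne_iff.1 (h 1 0 (Or.inl one_ne_zero))
    exact ⟨i, by simpa [eval_homogenize_one_zero] using hi⟩

/-- The restriction of a form of degree `d` to the line spanned by `a` and `b`, dehomogenized. -/
lemma exists_homogenize_eq_restrict {σ : Type} {F : MvPolynomial σ K} {d : ℕ}
    (hF : F.IsHomogeneous d) (a b : σ → K) :
    ∃ f : K[X], f.natDegree ≤ d ∧ ∀ s t,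
      MvPolynomial.eval ![s, t] (f.homogenize d) = MvPolynomial.eval (s • a + t • b) F := by
  set Q : MvPolynomial (Fin 2) K := MvPolynomial.aeval
    (fun i => MvPolynomial.C (a i) * MvPolynomial.X 0 + MvPolynomial.C (b i) * MvPolynomial.X 1) F
    with hQ
  have hQd : Q.IsHomogeneous d := by
    have := hF.aeval (S := K) (τ := Fin 2) (n := 1)
      (fun i => MvPolynomial.C (a i) * MvPolynomial.X 0 + MvPolynomial.C (b i) * MvPolynomial.X 1)
      (fun i => (MvPolynomial.isHomogeneous_C_mul_X _ _).add (MvPolynomial.isHomogeneous_C_mul_X _ _))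
    rwa [one_mul] at this
  refine ⟨MvPolynomial.aeval ![X, 1] Q, ?_, fun s t => ?_⟩
  · rw [Q.as_sum, map_sum]
    refine natDegree_sum_le_of_forall_le _ _ fun δ hδ => ?_
    have hdeg : δ 0 + δ 1 = d := by
      have := hQd.degree_eq_sum_deg_support hδ
      simpa [← Finsupp.degree_apply, Finsupp.degree_eq_sum] using this.symm
    rw [MvPolynomial.aeval_monomial, Finsupp.prod_fintype _ _ (by simp)]
    simp only [Fin.prod_univ_two, Matrix.cons_val_zero, Matrix.cons_val_one, one_pow, mul_one]
    refine (natDegree_C_mul_le _ _).trans ?_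
    rw [natDegree_X_pow]
    omega
  · rw [homogenize_eq_of_isHomogeneous hQd rfl, hQ, MvPolynomial.aeval_def,
      MvPolynomial.eval, MvPolynomial.coe_eval₂Hom, ← MvPolynomial.coe_eval₂Hom,
      MvPolynomial.hom_eval₂]
    congr 1
    · ext; simp
    · ext i
      simp [mul_comm]

/-- A binary polynomial without zeros off the origin is a nonzero constant. -/
lemma isUnit_of_eval_ne_zero [IsAlgClosed K] {h : MvPolynomial (Fin 2) K}
    (hh : ∀ s t : K, s ≠ 0 ∨ t ≠ 0 → MvPolynomial.eval ![s, t] h ≠ 0) : IsUnit h := by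
  have key : ∀ r : K[X], (∀ t, r.eval t ≠ 0) → ∀ t t', r.eval t = r.eval t' := fun r hr t t' => by
    have : r.degree = 0 := by
      by_contra hd
      obtain ⟨x, hx⟩ := IsAlgClosed.exists_root r hd
      exact hr x hx
    rw [eq_C_of_degree_eq_zero this]
    simp
  have ev : ∀ (v : Fin 2 → K[X]) (t : K), (MvPolynomial.aeval v h).eval t =
      MvPolynomial.eval (fun i => (v i).eval t) h := fun v t => by
    rw [MvPolynomial.aeval_def, ← coe_evalRingHom, MvPolynomial.hom_eval₂, MvPolynomial.eval,
      MvPolynomial.coe_eval₂Hom]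
    congr 1
    ext; simp
  have row : ∀ a : K, a ≠ 0 → ∀ t t', MvPolynomial.eval ![a, t] h = MvPolynomial.eval ![a, t'] h := by
    intro a ha t t'
    have hv : ∀ t, (fun i => ((![C a, X] : Fin 2 → K[X]) i).eval t) = ![a, t] := fun t => by
      ext i; fin_cases i <;> simp
    have := key (MvPolynomial.aeval ![C a, X] h)
      (fun t => by rw [ev, hv]; exact hh a t (Or.inl ha)) t t'
    rwa [ev, ev, hv, hv] at this
  have col : ∀ s s', MvPolynomial.eval ![s, 1] h = MvPolynomial.eval ![s', 1] h := by
    intro s s'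
    have hv : ∀ t, (fun i => ((![X, 1] : Fin 2 → K[X]) i).eval t) = ![t, 1] := fun t => by
      ext i; fin_cases i <;> simp
    have := key (MvPolynomial.aeval ![X, 1] h)
      (fun t => by rw [ev, hv]; exact hh t 1 (Or.inr one_ne_zero)) s s'
    rwa [ev, ev, hv, hv] at this
  set c := MvPolynomial.eval ![1, 1] h
  have hzero : (h - MvPolynomial.C c) * MvPolynomial.X 0 = 0 := by
    refine MvPolynomial.funext fun x => ?_
    have hx : x = ![x 0, x 1] := by ext i; fin_cases i <;> rfl
    by_cases hx0 : x 0 = 0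
    · simp [hx0]
    · have : MvPolynomial.eval x h = c := by
        rw [hx, row _ hx0 _ 1, col _ 1]
      simp [this]
  have hc : c ≠ 0 := hh 1 1 (Or.inl one_ne_zero)
  rw [sub_eq_zero.1 ((mul_eq_zero.1 hzero).resolve_right (MvPolynomial.X_ne_zero 0))]
  exact (isUnit_iff_ne_zero.2 hc).map MvPolynomial.C

end LineTuples

section Zariski

open Polynomial

variable {K V ι κ : Type} [Field K] [AddCommGroup V] [Module K V]

lemma exists_det_ne_zero_of_forall_eq_zero [Fintype ι] [DecidableEq ι] (A : κ → ι → K)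
    (hA : ∀ x : ι → K, (∀ r, ∑ c, A r c * x c = 0) → x = 0) :
    ∃ ρ : ι → κ, (Matrix.of fun c => A (ρ c)).det ≠ 0 := by
  have hspan : Submodule.span K (Set.range A) = ⊤ := by
    by_contra h
    obtain ⟨f, hf0, hf⟩ := Submodule.exists_le_ker_of_lt_top _ (lt_top_iff_ne_top.2 h)
    have hfx : ∀ y : ι → K, f y = ∑ c, y c * f (Pi.single c 1) := fun y => by
      conv_lhs => rw [pi_eq_sum_univ' y]
      simp [map_sum]
    refine hf0 (LinearMap.ext fun y => ?_)
    have hz := hA (fun c => f (Pi.single c 1)) fun r => by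
      rw [← hfx]
      exact hf (Submodule.subset_span ⟨r, rfl⟩)
    rw [hfx]
    simp [fun c => congrFun hz c]
  obtain ⟨μ, a, -, hsp, hli⟩ := exists_linearIndependent' K A
  let e : ι ≃ μ := (Pi.basisFun K ι).indexEquiv (Module.Basis.mk hli (by rw [hsp, hspan]))
  refine ⟨a ∘ e, ?_⟩
  have := Matrix.linearIndependent_rows_iff_isUnit (A := Matrix.of fun c => A ((a ∘ e) c))
  rw [← isUnit_iff_ne_zero, ← Matrix.isUnit_iff_isUnit_det, ← this]
  exact hli.comp e e.injective

lemma isOpen_zar_ne_zero {f : V → K} (hf : f ∈ polyFuns K V) :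
    @IsOpen V (zar K V) {x | f x ≠ 0} :=
  TopologicalSpace.isOpen_generateFrom_of_mem ⟨f, hf, rfl⟩

/-- The locus where a linear system with polynomial coefficients has a nontrivial solution is
closed. -/
lemma isClosed_exists_ne_zero_solution [Fintype ι] (T : κ → ι → V → K)
    (hT : ∀ r c, T r c ∈ polyFuns K V) :
    @IsClosed V (zar K V) {z | ∃ x : ι → K, x ≠ 0 ∧ ∀ r, ∑ c, T r c z * x c = 0} := by
  classical
  let _ := zar K V
  rw [← isOpen_compl_iff, isOpen_iff_forall_mem_open]
  intro z₀ hz₀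
  obtain ⟨ρ, hρ⟩ := exists_det_ne_zero_of_forall_eq_zero (fun r c => T r c z₀) fun x hx => by
    by_contra h
    exact hz₀ ⟨x, h, hx⟩
  refine ⟨{z | (∑ σ : Equiv.Perm ι, (Equiv.Perm.sign σ : ℤ) • ∏ c, T (ρ (σ c)) c) z ≠ 0}, ?_,
    isOpen_zar_ne_zero (Subalgebra.sum_mem _ fun σ _ => zsmul_mem
      (Subalgebra.prod_mem _ fun c _ => hT _ _) _), ?_⟩
  · rintro z hz ⟨x, hx, hsol⟩
    apply hz
    have := Matrix.exists_mulVec_eq_zero_iff.1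
      (⟨x, hx, funext fun c => hsol (ρ c)⟩ : ∃ v ≠ 0,
        (Matrix.of fun c c' => T (ρ c) c' z).mulVec v = 0)
    rw [Matrix.det_apply] at this
    simpa [Units.smul_def] using this
  · rw [Matrix.det_apply] at hρ
    simpa [Units.smul_def] using hρ

/-- The locus where a family of tuples of polynomial functions, depending polynomially on a
parameter, is proportional to a nonzero tuple of polynomials of degree less than `n` is closed. -/
lemma isClosed_exists_cross_eq [Fintype ι] (N : κ → ι → K → V → K)
    (hN : ∀ j l s, N j l s ∈ polyFuns K V) (n : ℕ) :
    @IsClosed V (zar K V) {z | ∃ f : ι → K[X], f ≠ 0 ∧ (∀ l, f l ∈ degreeLT K n) ∧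
      ∀ j l l' s, (f l).eval s * N j l' s z = (f l').eval s * N j l s z} := by
  classical
  let _ := zar K V
  convert isClosed_exists_ne_zero_solution
    (fun (r : κ × ι × ι × K) (c : ι × Fin n) =>
      r.2.2.2 ^ (c.2 : ℕ) • ((if c.1 = r.2.1 then N r.1 r.2.2.1 r.2.2.2 else 0) -
        (if c.1 = r.2.2.1 then N r.1 r.2.1 r.2.2.2 else 0))) ?_ using 1
  · have sum_eq : ∀ (x : ι × Fin n → K) (r : κ × ι × ι × K) (z : V),
        (∑ c : ι × Fin n, (r.2.2.2 ^ (c.2 : ℕ) •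
          ((if c.1 = r.2.1 then N r.1 r.2.2.1 r.2.2.2 else 0) -
          (if c.1 = r.2.2.1 then N r.1 r.2.1 r.2.2.2 else 0))) z * x c) =
        (∑ i : Fin n, x (r.2.1, i) * r.2.2.2 ^ (i : ℕ)) * N r.1 r.2.2.1 r.2.2.2 z -
          (∑ i : Fin n, x (r.2.2.1, i) * r.2.2.2 ^ (i : ℕ)) * N r.1 r.2.1 r.2.2.2 z := by
      intro x r z
      have ite_apply' : ∀ (P : Prop) [Decidable P] (g : V → K),
          (if P then g else 0) z = if P then g z else 0 := fun P _ g => by split_ifs <;> rfl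
      rw [Fintype.sum_prod_type_right, Finset.sum_mul, Finset.sum_mul, ← Finset.sum_sub_distrib]
      refine Finset.sum_congr rfl fun i _ => ?_
      simp only [Pi.smul_apply, Pi.sub_apply, ite_apply', smul_eq_mul, mul_sub, sub_mul,
        Finset.sum_sub_distrib, mul_ite, ite_mul, mul_zero, zero_mul, Finset.sum_ite_eq',
        Finset.mem_univ, if_true]
      ring
    ext z
    simp only [Set.mem_ofPred_eq, sum_eq, sub_eq_zero]
    constructor
    · rintro ⟨f, hf0, hfn, hf⟩
      have ev : ∀ l s, ∑ i : Fin n, (f l).coeff i * s ^ (i : ℕ) = (f l).eval s := fun l s => by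
        rw [eval_eq_sum_degreeLTEquiv (hfn l)]
        rfl
      refine ⟨fun c => (f c.1).coeff c.2, fun h => hf0 (funext fun l => ?_), fun r => ?_⟩
      · ext i
        by_cases hi : i < n
        · exact congrFun h (l, ⟨i, hi⟩)
        · simpa using coeff_eq_zero_of_degree_lt
            ((mem_degreeLT.1 (hfn l)).trans_le (by exact_mod_cast not_lt.1 hi))
      · simp only [ev]
        exact hf _ _ _ _
    · rintro ⟨x, hx0, hx⟩
      refine ⟨fun l => ∑ i : Fin n, monomial i (x (l, i)), fun h => hx0 (funext fun c => ?_),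
        fun l => ?_, fun j l l' s => ?_⟩
      · have := congrArg (fun q : K[X] => q.coeff c.2) (congrFun h c.1)
        simpa [finsetSum_coeff, coeff_monomial, Fin.val_inj] using this
      · refine Submodule.sum_mem _ fun i _ => mem_degreeLT.2 ?_
        exact (degree_monomial_le _ _).trans_lt (by exact_mod_cast i.2)
      · simpa [eval_finsetSum] using hx (j, l, l', s)
  · rintro ⟨j, l, l', s⟩ ⟨c, i⟩
    refine Subalgebra.smul_mem _ (Subalgebra.sub_mem _ ?_ ?_) _
    · dsimp only
      split_ifs
      exacts [hN _ _ _, Subalgebra.zero_mem _]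
    · dsimp only
      split_ifs
      exacts [hN _ _ _, Subalgebra.zero_mem _]

variable [FiniteDimensional K V]

lemma polyEval_linear_mem_polyFuns {W : Type} [AddCommGroup W] [Module K W]
    (F : MvPolynomial (Fin (Module.finrank K V)) K) (g : W →ₗ[K] V) :
    (fun z => polyEval F (g z)) ∈ polyFuns K W := by
  induction F using MvPolynomial.induction_on with
  | C a =>
    convert Subalgebra.algebraMap_mem (polyFuns K W) a
    simp [polyEval]
  | add p q hp hq =>
    convert Subalgebra.add_mem _ hp hq
    simp [polyEval]
  | mul_X p i hp =>
    have : (fun z => (Module.finBasis K V).repr (g z) i) ∈ polyFuns K W :=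
      Algebra.subset_adjoin ⟨(Module.finBasis K V).coord i ∘ₗ g, rfl⟩
    convert Subalgebra.mul_mem _ hp this
    simp [polyEval]

lemma exists_polyEval_eq {f : V → K} (hf : f ∈ polyFuns K V) :
    ∃ F : MvPolynomial (Fin (Module.finrank K V)) K, ∀ x, f x = polyEval F x := by
  induction hf using Algebra.adjoin_induction with
  | mem f hf =>
    obtain ⟨ψ, rfl⟩ := hf
    refine ⟨∑ i, MvPolynomial.C (ψ (Module.finBasis K V i)) * MvPolynomial.X i, fun x => ?_⟩
    conv_lhs => rw [← (Module.finBasis K V).sum_repr x]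
    simp only [polyEval, map_sum, map_smul, smul_eq_mul, map_mul, MvPolynomial.eval_C,
      MvPolynomial.eval_X, mul_comm]
  | algebraMap r => exact ⟨MvPolynomial.C r, fun x => by simp [polyEval]⟩
  | add f g _ _ hf hg =>
    obtain ⟨F, hF⟩ := hf
    obtain ⟨G, hG⟩ := hg
    exact ⟨F + G, fun x => by simp [hF, hG, polyEval]⟩
  | mul f g _ _ hf hg =>
    obtain ⟨F, hF⟩ := hf
    obtain ⟨G, hG⟩ := hg
    exact ⟨F * G, fun x => by simp [hF, hG, polyEval]⟩

lemma polyEval_smul {F : MvPolynomial (Fin (Module.finrank K V)) K} {d : ℕ}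
    (hF : F.IsHomogeneous d) (c : K) (x : V) :
    polyEval F (c • x) = c ^ d * polyEval F x := by
  rw [polyEval, polyEval, ← eval_smul_of_isHomogeneous hF]
  congr 2
  funext i
  simp

lemma exists_polyEval_ne_zero_subset_of_isOpen {O : Set V} (hO : @IsOpen V (zar K V) O) {x : V}
    (hx : x ∈ O) : ∃ F : MvPolynomial (Fin (Module.finrank K V)) K,
      polyEval F x ≠ 0 ∧ ∀ y, polyEval F y ≠ 0 → y ∈ O := by
  induction hO with
  | basic U hU =>
    obtain ⟨f, hf, rfl⟩ := hU
    obtain ⟨F, hF⟩ := exists_polyEval_eq hf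
    exact ⟨F, by rw [← hF]; exact hx, fun y hy => by rw [← hF] at hy; exact hy⟩
  | univ => exact ⟨1, by simp [polyEval], fun _ _ => trivial⟩
  | inter U W _ _ hU hW =>
    obtain ⟨F, hF, hF'⟩ := hU hx.1
    obtain ⟨G, hG, hG'⟩ := hW hx.2
    refine ⟨F * G, ?_, fun y hy => ?_⟩
    · simpa [polyEval] using ⟨hF, hG⟩
    · have : polyEval F y ≠ 0 ∧ polyEval G y ≠ 0 := by simpa [polyEval] using hy
      exact ⟨hF' y this.1, hG' y this.2⟩
  | sUnion S _ hS =>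
    obtain ⟨U, hU, hxU⟩ := hx
    obtain ⟨F, hF, hF'⟩ := hS U hU hxU
    exact ⟨F, hF, fun y hy => ⟨U, hU, hF' y hy⟩⟩

/-- Open subsets of projective space are unions of principal open sets of forms. -/
lemma exists_isHomogeneous_subset_of_isOpen [Infinite K] {O : Set (Projectivization K V)}
    (hO : @IsOpen _ (projTop K V) O) {x : V} (hx : x ≠ 0) (hxO : Projectivization.mk K x hx ∈ O) :
    ∃ (d : ℕ) (F : MvPolynomial (Fin (Module.finrank K V)) K), F.IsHomogeneous d ∧
      polyEval F x ≠ 0 ∧ ∀ (y : V) (hy : y ≠ 0), polyEval F y ≠ 0 →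
        Projectivization.mk K y hy ∈ O := by
  obtain ⟨O', hO', hpre⟩ := hO
  have hmem : ∀ (y : V) (hy : y ≠ 0), y ∈ O' ↔ Projectivization.mk K y hy ∈ O := fun y hy =>
    Set.ext_iff.1 hpre ⟨y, hy⟩
  obtain ⟨F, hFx, hF⟩ := exists_polyEval_ne_zero_subset_of_isOpen hO' ((hmem x hx).2 hxO)
  have hsum : ∀ y, polyEval F y = ∑ i ∈ Finset.range (F.totalDegree + 1),
      polyEval (MvPolynomial.homogeneousComponent i F) y := fun y => by
    conv_lhs => rw [← F.sum_homogeneousComponent]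
    simp [polyEval, map_sum]
  obtain ⟨i, hi, hix⟩ : ∃ i ∈ Finset.range (F.totalDegree + 1),
      polyEval (MvPolynomial.homogeneousComponent i F) x ≠ 0 := by
    by_contra! h
    exact hFx (by rw [hsum, Finset.sum_eq_zero h])
  refine ⟨i, _, MvPolynomial.homogeneousComponent_isHomogeneous i F, hix, fun y hy hne => ?_⟩
  by_contra hyO
  have hvan : ∀ c : K, c ≠ 0 → polyEval F (c • y) = 0 := fun c hc => by
    by_contra hcy
    apply hyO
    have h1 := (hmem _ (smul_ne_zero hc hy)).1 (hF _ hcy)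
    rwa [(Projectivization.mk_eq_mk_iff' K _ _ (smul_ne_zero hc hy) hy).2 ⟨c, rfl⟩] at h1
  set q : K[X] := ∑ i ∈ Finset.range (F.totalDegree + 1),
    monomial i (polyEval (MvPolynomial.homogeneousComponent i F) y)
  have hq : X * q = 0 := by
    refine Polynomial.funext fun c => ?_
    by_cases hc : c = 0
    · simp [hc]
    · have := hvan c hc
      rw [hsum] at this
      simp only [polyEval_smul (MvPolynomial.homogeneousComponent_isHomogeneous _ F)] at this
      simp only [q, eval_mul, eval_finsetSum, eval_monomial, eval_zero, mul_comm _ (c ^ _), this,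
        mul_zero]
  have hq0 := (mul_eq_zero.1 hq).resolve_left X_ne_zero
  apply hne
  have := congrArg (fun r : K[X] => r.coeff i) hq0
  simpa [q, finsetSum_coeff, coeff_monomial, Finset.mem_range.1 hi] using this

end Zariski

section Morphism

open Polynomial

variable {K V : Type} [Field K] [AddCommGroup V] [Module K V] [FiniteDimensional K V]
  {S : Set V} {m : ℕ} {φ : projOf K S → Projectivization K (Fin (m + 1) → K)}

variable (φ) in
/-- A tuple of forms of degree `d` that defines `φ` at every point of `P(S)` where it does not
vanish. -/
structure Represents (d : ℕ) (F : Fin (m + 1) → MvPolynomial (Fin (Module.finrank K V)) K) :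
    Prop where
  isHomogeneous : ∀ i, (F i).IsHomogeneous d
  apply_eq : ∀ (x : V) (hx : x ≠ 0) (q : projOf K S), q.1 = Projectivization.mk K x hx →
    ∀ hF : (fun i => polyEval (F i) x) ≠ 0,
      φ q = Projectivization.mk K (fun i => polyEval (F i) x) hF

lemma cross_eq_of_mk_eq_mk {n : ℕ} {a b : Fin n → K} {ha : a ≠ 0} {hb : b ≠ 0}
    (h : Projectivization.mk K a ha = Projectivization.mk K b hb) (i l : Fin n) :
    a i * b l = a l * b i := by
  obtain ⟨c, rfl⟩ := (Projectivization.mk_eq_mk_iff' K _ _ ha hb).1 h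
  simp only [Pi.smul_apply, smul_eq_mul]
  ring

lemma mk_mul_eq_mk {n : ℕ} {c : K} {a : Fin n → K} (hca : (fun i => c * a i) ≠ 0) (ha : a ≠ 0) :
    Projectivization.mk K (fun i => c * a i) hca = Projectivization.mk K a ha :=
  (Projectivization.mk_eq_mk_iff' K _ _ hca ha).2 ⟨c, rfl⟩

lemma Represents.mul {d e : ℕ} {F : Fin (m + 1) → MvPolynomial (Fin (Module.finrank K V)) K}
    (hF : Represents φ d F) {f : MvPolynomial (Fin (Module.finrank K V)) K}
    (hf : f.IsHomogeneous e) : Represents φ (e + d) (fun i => f * F i) := by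
  refine ⟨fun i => hf.mul (hF.isHomogeneous i), fun x hx q hq hne => ?_⟩
  have hmul : (fun i => polyEval (f * F i) x) = fun i => polyEval f x * polyEval (F i) x := by
    funext i; simp [polyEval]
  have hne' : (fun i => polyEval (F i) x) ≠ 0 := fun h => hne <| by
    rw [hmul]; funext i; rw [congrFun h i]; simp
  simp only [hF.apply_eq x hx q hq hne', hmul]
  rw [mk_mul_eq_mk]

lemma IsMorphismOn.exists_represents [Infinite K] (hφ : IsMorphismOn S m φ) {x : V} (hx : x ≠ 0)
    {q : projOf K S} (hq : q.1 = Projectivization.mk K x hx) :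
    ∃ d F, Represents φ d F ∧ (fun i => polyEval (F i) x) ≠ 0 := by
  obtain ⟨U, ⟨O, hO, rfl⟩, hqU, d, F, hF, hrep⟩ := hφ q
  obtain ⟨e, f, hf, hfx, hfO⟩ := exists_isHomogeneous_subset_of_isOpen hO hx (hq ▸ hqU)
  have hmul : ∀ y, (fun i => polyEval (f * F i) y) = fun i => polyEval f y * polyEval (F i) y :=
    fun y => by funext i; simp [polyEval]
  refine ⟨e + d, fun i => f * F i, ⟨fun i => hf.mul (hF i), fun y hy r hr hne => ?_⟩, ?_⟩
  · have hfy : polyEval f y ≠ 0 := fun h => hne (by rw [hmul]; funext i; simp [h])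
    obtain ⟨hFy, heq⟩ := hrep y hy r (by
      change r.1 ∈ O
      rw [hr]
      exact hfO y hy hfy) hr
    simp only [heq, hmul]
    rw [mk_mul_eq_mk]
  · obtain ⟨hFx, -⟩ := hrep x hx q hqU hq
    obtain ⟨i, hi⟩ := Function.ne_iff.1 hFx
    exact Function.ne_iff.2 ⟨i, by simpa [polyEval] using ⟨hfx, hi⟩⟩

/-- A morphism is defined globally by finitely many tuples of forms of one common degree. -/
lemma IsMorphismOn.exists_global_system [Infinite K] (hφ : IsMorphismOn S m φ) :
    ∃ (D : ℕ) (J : Type) (_ : Fintype J)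
      (M : J → Fin (m + 1) → MvPolynomial (Fin (Module.finrank K V)) K),
      (∀ j, Represents φ D (M j)) ∧
      ∀ (x : V) (hx : x ≠ 0) (q : projOf K S), q.1 = Projectivization.mk K x hx →
        ∃ j, (fun i => polyEval (M j i) x) ≠ 0 := by
  let R := MvPolynomial (Fin (Module.finrank K V)) K
  let G : Set (Fin (m + 1) → R) := {F | ∃ d, Represents φ d F}
  obtain ⟨T, hTG, hT⟩ := (Submodule.fg_span_iff_fg_span_finset_subset (R := R) G).1
    (IsNoetherian.noetherian _)
  have hdeg : ∀ F : T, ∃ d, Represents φ d F.1 := fun F => hTG F.2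
  choose d hd using hdeg
  refine ⟨∑ F, d F, T × Fin (Module.finrank K V), inferInstance,
    fun j i => MvPolynomial.X j.2 ^ (∑ F, d F - d j.1) * j.1.1 i, fun j => ?_,
    fun x hx q hq => ?_⟩
  · have hle : d j.1 ≤ ∑ F, d F :=
      Finset.single_le_sum (fun _ _ => Nat.zero_le _) (Finset.mem_univ j.1)
    have := (hd j.1).mul (MvPolynomial.isHomogeneous_X_pow (R := K) j.2 (∑ F, d F - d j.1))
    rwa [Nat.sub_add_cancel hle] at this
  · obtain ⟨F, hF⟩ : ∃ F ∈ T, (fun i => polyEval (F i) x) ≠ 0 := by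
      by_contra! h
      obtain ⟨e, F, hF, hFx⟩ := hφ.exists_represents hx hq
      have hFT : F ∈ Submodule.span R (T : Set (Fin (m + 1) → R)) :=
        hT ▸ Submodule.subset_span (⟨e, hF⟩ : F ∈ G)
      apply hFx
      clear hFx hF
      induction hFT using Submodule.span_induction with
      | mem F hF => exact h F hF
      | zero => funext i; simp [polyEval]
      | add a b _ _ ha hb =>
        funext i
        have h1 := congrFun ha i
        have h2 := congrFun hb i
        simp only [polyEval, Pi.zero_apply] at h1 h2
        simp [polyEval, h1, h2]
      | smul r a _ ha =>
        funext i
        have h1 := congrFun ha i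
        simp only [polyEval, Pi.zero_apply] at h1
        simp [polyEval, h1]
    obtain ⟨c, hc⟩ : ∃ c, (Module.finBasis K V).repr x c ≠ 0 := by
      by_contra! h
      exact hx ((Module.finBasis K V).ext_elem fun i => by simpa using h i)
    obtain ⟨i, hi⟩ := Function.ne_iff.1 hF.2
    refine ⟨(⟨F, hF.1⟩, c), Function.ne_iff.2 ⟨i, ?_⟩⟩
    have hi' : polyEval (F i) x ≠ 0 := hi
    simp only [polyEval, map_mul, map_pow, MvPolynomial.eval_X, Pi.zero_apply]
    exact mul_ne_zero (pow_ne_zero _ hc) hi'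

variable {D : ℕ} {J : Type}
  {M : J → Fin (m + 1) → MvPolynomial (Fin (Module.finrank K V)) K}

lemma exists_restrict_to_line (hM : ∀ j, Represents φ D (M j)) (u w : V) :
    ∃ N : J → Fin (m + 1) → K[X], (∀ j l, (N j l).natDegree ≤ D) ∧ ∀ j l s t,
      MvPolynomial.eval ![s, t] ((N j l).homogenize D) = polyEval (M j l) (s • u + t • w) := by
  have := fun j l => exists_homogenize_eq_restrict ((hM j).isHomogeneous l)
    (fun i => (Module.finBasis K V).repr u i) (fun i => (Module.finBasis K V).repr w i)
  choose N hN hN' using this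
  refine ⟨N, hN, fun j l s t => ?_⟩
  rw [hN', polyEval]
  congr 2
  funext i
  simp

/-- The restriction of `φ` to a line is given by a base point free tuple of binary forms, whose
degree is `planeDeg`; the complementary degree is that of the base point free tuple of common
factors of the given global system. -/
lemma exists_planeDeg_factorization [IsAlgClosed K] (hM : ∀ j, Represents φ D (M j))
    (hcov : ∀ (x : V) (hx : x ≠ 0) (q : projOf K S), q.1 = Projectivization.mk K x hx →
      ∃ j, (fun i => polyEval (M j i) x) ≠ 0)
    {v : Submodule K V} (hvS : (v : Set V) ⊆ S) {u w : V}
    (huw : LinearIndependent K ![u, w]) (hv : Submodule.span K (Set.range ![u, w]) = v) :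
    ∃ (e' : ℕ) (g : Fin (m + 1) → K[X]) (h : J → K[X]), planeDeg m φ v + e' = D ∧
      IsBasePointFree (planeDeg m φ v) g ∧ IsBasePointFree e' h ∧
      ∀ j l s, polyEval (M j l) (s • u + w) = (h j).eval s * (g l).eval s := by
  have hspan : ∀ x, x ∈ v ↔ ∃ s t : K, s • u + t • w = x := fun x => by
    rw [← hv, Matrix.range_cons, Matrix.range_cons, Matrix.range_empty, Set.union_empty,
      Set.singleton_union, Submodule.mem_span_pair]
  have hne : ∀ s t : K, s ≠ 0 ∨ t ≠ 0 → s • u + t • w ≠ 0 := fun s t hst h0 => by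
    have := LinearIndependent.pair_iff.1 huw s t h0
    tauto
  have hpt : ∀ (x : V) (hx : x ≠ 0), x ∈ v →
      ∃ q : projOf K S, q.1 = Projectivization.mk K x hx := fun x hx hxv =>
    ⟨⟨Projectivization.mk K x hx, x, hx, hvS hxv, rfl⟩, rfl⟩
  obtain ⟨N, hNdeg, hN⟩ := exists_restrict_to_line hM u w
  have hNfree : IsBasePointFree D (fun x : J × Fin (m + 1) => N x.1 x.2) := by
    refine isBasePointFree_of_eval_homogenize_ne_zero (fun x => hNdeg _ _) fun s t hst => ?_
    obtain ⟨q, hq⟩ := hpt _ (hne s t hst) ((hspan _).2 ⟨s, t, rfl⟩)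
    obtain ⟨j, hj⟩ := hcov _ _ q hq
    obtain ⟨l, hl⟩ := Function.ne_iff.1 hj
    exact Function.ne_iff.2 ⟨(j, l), by simpa [hN] using hl⟩
  have hNeval : ∀ j l s, (N j l).eval s = polyEval (M j l) (s • u + w) := fun j l s => by
    rw [← eval_homogenize_one_right (hNdeg j l), hN, one_smul]
  have hrk : ∀ j j' l l', N j l * N j' l' = N j l' * N j' l := fun j j' l l' => by
    refine Polynomial.funext fun s => ?_
    simp only [eval_mul, hNeval]
    have hx : s • u + w ≠ 0 := by simpa using hne s 1 (Or.inr one_ne_zero)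
    obtain ⟨q, hq⟩ := hpt _ hx ((hspan _).2 ⟨s, 1, by simp⟩)
    by_cases hj : (fun i => polyEval (M j i) (s • u + w)) = 0
    · simp [show ∀ i, polyEval (M j i) (s • u + w) = 0 from congrFun hj]
    · by_cases hj' : (fun i => polyEval (M j' i) (s • u + w)) = 0
      · simp [show ∀ i, polyEval (M j' i) (s • u + w) = 0 from congrFun hj']
      · exact cross_eq_of_mk_eq_mk (((hM j).apply_eq _ hx q hq hj).symm.trans
          ((hM j').apply_eq _ hx q hq hj')) l l'
  obtain ⟨e, e', g, h, hee, hg, hh, hNgh⟩ := hNfree.exists_outer_product hrk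
  have hgφ : ∀ (s t : K) (hx : s • u + t • w ≠ 0) (q : projOf K S),
      q.1 = Projectivization.mk K (s • u + t • w) hx →
      ∃ hF : (fun i => MvPolynomial.eval (![s, t] : Fin 2 → K) ((g i).homogenize e)) ≠ 0,
        φ q = Projectivization.mk K
          (fun i => MvPolynomial.eval (![s, t] : Fin 2 → K) ((g i).homogenize e)) hF := by
    intro s t hx q hq
    have hst : s ≠ 0 ∨ t ≠ 0 := by
      by_contra! h0
      exact hx (by simp [h0.1, h0.2])
    refine ⟨hg.eval_homogenize_ne_zero hst, ?_⟩
    obtain ⟨j, hj⟩ := hcov _ _ q hq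
    rw [(hM j).apply_eq _ hx q hq hj]
    have hrow : (fun i => polyEval (M j i) (s • u + t • w)) = fun i =>
        MvPolynomial.eval ![s, t] ((h j).homogenize e') *
          MvPolynomial.eval ![s, t] ((g i).homogenize e) := by
      funext i
      rw [← hN, hNgh, ← hee, add_comm e, homogenize_mul _ _ (hh.natDegree_le j) (hg.natDegree_le i),
        map_mul]
    simp only [hrow]
    rw [mk_mul_eq_mk]
  have hdeg : planeDeg m φ v = e := by
    have hset : ∀ d, (∃ u w : V, u ∈ v ∧ w ∈ v ∧ LinearIndependent K ![u, w] ∧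
        ∃ F : Fin (m + 1) → MvPolynomial (Fin 2) K, (∀ i, (F i).IsHomogeneous d) ∧
        (∀ h : MvPolynomial (Fin 2) K, (∀ i, h ∣ F i) → IsUnit h) ∧
        ∀ (s t : K) (hx : s • u + t • w ≠ 0) (q : projOf K S),
          q.1 = Projectivization.mk K (s • u + t • w) hx →
          ∃ hF : (fun i => MvPolynomial.eval (![s, t] : Fin 2 → K) (F i)) ≠ 0,
            φ q = Projectivization.mk K
              (fun i => MvPolynomial.eval (![s, t] : Fin 2 → K) (F i)) hF) ↔ d = e := by
      intro d
      constructor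
      · rintro ⟨u', w', hu', hw', huw', F, hF, -, hFφ⟩
        have hspan' : Submodule.span K (Set.range ![u', w']) = v := by
          have hfin : Module.finrank K v = 2 := by
            rw [← hv, finrank_span_eq_card huw, Fintype.card_fin]
          have : FiniteDimensional K v := inferInstance
          refine Submodule.eq_of_le_of_finrank_eq ?_ ?_
          · rw [Submodule.span_le]
            rintro _ ⟨i, rfl⟩
            fin_cases i
            exacts [hu', hw']
          · rw [hfin, finrank_span_eq_card huw', Fintype.card_fin]
        have hmem' : ∀ x ∈ v, ∃ s t : K, s • u' + t • w' = x := fun x hx => by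
          rwa [← hspan', Matrix.range_cons, Matrix.range_cons, Matrix.range_empty, Set.union_empty,
            Set.singleton_union, Submodule.mem_span_pair] at hx
        obtain ⟨a₀, a₁, ha⟩ := hmem' u ((hspan u).2 ⟨1, 0, by simp⟩)
        obtain ⟨b₀, b₁, hb⟩ := hmem' w ((hspan w).2 ⟨0, 1, by simp⟩)
        have hcomb : ∀ s t : K,
            s • u + t • w = (s * a₀ + t * b₀) • u' + (s * a₁ + t * b₁) • w' := fun s t => by
          rw [← ha, ← hb]
          module
        have hvec : ∀ s t : K,
            s • ![a₀, a₁] + t • ![b₀, b₁] = ![s * a₀ + t * b₀, s * a₁ + t * b₁] := fun s t => by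
          ext i; fin_cases i <;> simp
        choose f hfdeg hf using fun l => exists_homogenize_eq_restrict (hF l) ![a₀, a₁] ![b₀, b₁]
        have hfφ : ∀ (s t : K) (hx : s • u + t • w ≠ 0) (q : projOf K S),
            q.1 = Projectivization.mk K (s • u + t • w) hx →
            ∃ hF : (fun i => MvPolynomial.eval (![s, t] : Fin 2 → K) ((f i).homogenize d)) ≠ 0,
              φ q = Projectivization.mk K
                (fun i => MvPolynomial.eval (![s, t] : Fin 2 → K) ((f i).homogenize d)) hF := by
          intro s t hx q hq
          simp only [hf, hvec]
          refine hFφ _ _ (by rwa [← hcomb]) q ?_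
          rw [hq]
          congr 1
          exact hcomb s t
        refine hg.degree_unique
          (isBasePointFree_of_eval_homogenize_ne_zero hfdeg fun s t hst => ?_) fun i l => ?_
        · obtain ⟨q, hq⟩ := hpt _ (hne s t hst) ((hspan _).2 ⟨s, t, rfl⟩)
          exact (hfφ s t _ q hq).1
        · refine Polynomial.funext fun s => ?_
          obtain ⟨q, hq⟩ := hpt _ (hne s 1 (Or.inr one_ne_zero)) ((hspan _).2 ⟨s, 1, rfl⟩)
          obtain ⟨_, h1⟩ := hfφ s 1 _ q hq
          obtain ⟨_, h2⟩ := hgφ s 1 _ q hq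
          have := cross_eq_of_mk_eq_mk (h1.symm.trans h2) i l
          simpa only [eval_mul, eval_homogenize_one_right (hfdeg _),
            eval_homogenize_one_right (hg.natDegree_le _)] using this
      · rintro rfl
        refine ⟨u, w, (hspan u).2 ⟨1, 0, by simp⟩, (hspan w).2 ⟨0, 1, by simp⟩, huw,
          fun i => (g i).homogenize d, fun i => isHomogeneous_homogenize _, fun r hr => ?_, hgφ⟩
        refine isUnit_of_eval_ne_zero fun s t hst hz => ?_
        refine hg.eval_homogenize_ne_zero hst (funext fun i => ?_)
        obtain ⟨c, hc⟩ := hr i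
        simp [hc, hz]
    have : planeDeg m φ v = sSup {e} := by
      unfold planeDeg
      congr 1
      ext d
      exact hset d
    rw [this, csSup_singleton]
  rw [hdeg]
  exact ⟨e', g, h, hee, hg, hh, fun j l s => by rw [← hNeval, hNgh, eval_mul]⟩

lemma planeDeg_lt_iff [IsAlgClosed K] (hM : ∀ j, Represents φ D (M j))
    (hcov : ∀ (x : V) (hx : x ≠ 0) (q : projOf K S), q.1 = Projectivization.mk K x hx →
      ∃ j, (fun i => polyEval (M j i) x) ≠ 0)
    {v : Submodule K V} (hvS : (v : Set V) ⊆ S) {u w : V}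
    (huw : LinearIndependent K ![u, w]) (hv : Submodule.span K (Set.range ![u, w]) = v) (n : ℕ) :
    planeDeg m φ v < n ↔ ∃ f : Fin (m + 1) → K[X], f ≠ 0 ∧ (∀ l, f l ∈ degreeLT K n) ∧
      ∀ j l l' s, (f l).eval s * polyEval (M j l') (s • u + w) =
        (f l').eval s * polyEval (M j l) (s • u + w) := by
  obtain ⟨e', g, h, -, hg, hh, hM'⟩ := exists_planeDeg_factorization hM hcov hvS huw hv
  constructor
  · exact fun hn => ⟨g, hg.ne_zero, hg.mem_degreeLT hn, fun j l l' s => by rw [hM', hM']; ring⟩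
  · rintro ⟨f, hf0, hfn, hf⟩
    refine hg.lt_of_cross_eq hf0 hfn fun i l => ?_
    obtain ⟨j, hj⟩ := Function.ne_iff.1 hh.ne_zero
    refine mul_left_cancel₀ hj (Polynomial.funext fun s => ?_)
    have := hf j i l s
    rw [hM', hM'] at this
    simp only [eval_mul]
    linear_combination this

lemma sub_planeDeg_lt_iff [IsAlgClosed K] [Fintype J] (hM : ∀ j, Represents φ D (M j))
    (hcov : ∀ (x : V) (hx : x ≠ 0) (q : projOf K S), q.1 = Projectivization.mk K x hx →
      ∃ j, (fun i => polyEval (M j i) x) ≠ 0)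
    {v : Submodule K V} (hvS : (v : Set V) ⊆ S) {u w : V}
    (huw : LinearIndependent K ![u, w]) (hv : Submodule.span K (Set.range ![u, w]) = v) (n : ℕ) :
    D - planeDeg m φ v < n ↔ ∃ f : J → K[X], f ≠ 0 ∧ (∀ j, f j ∈ degreeLT K n) ∧
      ∀ l j j' s, (f j).eval s * polyEval (M j' l) (s • u + w) =
        (f j').eval s * polyEval (M j l) (s • u + w) := by
  obtain ⟨e', g, h, he', hg, hh, hM'⟩ := exists_planeDeg_factorization hM hcov hvS huw hv
  rw [← he', Nat.add_sub_cancel_left]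
  constructor
  · exact fun hn => ⟨h, hh.ne_zero, hh.mem_degreeLT hn, fun j l l' s => by rw [hM', hM']; ring⟩
  · rintro ⟨f, hf0, hfn, hf⟩
    refine hh.lt_of_cross_eq hf0 hfn fun i j => ?_
    obtain ⟨l, hl⟩ := Function.ne_iff.1 hg.ne_zero
    refine mul_right_cancel₀ hl (Polynomial.funext fun s => ?_)
    have := hf l i j s
    rw [hM', hM'] at this
    simp only [eval_mul]
    linear_combination this

end Morphism

section Planes

variable {K L : Type} [Field K] [LieRing L] [LieAlgebra K L]

lemma isClosed_inter_planeTop {C : Set (Submodule K L)} {X Q : Set C} {A : Set (L × L)}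
    (hX : @IsClosed _ (planeTop C) X) (hA : @IsClosed _ (zar K (L × L)) A)
    (hQ : ∀ z : planePairs C, planeMk C z ∈ X → (planeMk C z ∈ Q ↔ z.1 ∈ A)) :
    @IsClosed _ (planeTop C) (X ∩ Q) := by
  let _ := zar K (L × L)
  have hX' : IsClosed (planeMk C ⁻¹' X) := isClosed_coinduced.1 hX
  have hpre : planeMk C ⁻¹' (X ∩ Q) = planeMk C ⁻¹' X ∩ Subtype.val ⁻¹' A :=
    Set.ext fun z => and_congr_right fun hz => hQ z hz
  refine isClosed_coinduced.2 ?_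
  rw [hpre]
  exact hX'.inter (hA.preimage continuous_subtype_val)

lemma planeMk_surjective {C : Set (Submodule K L)} (hC : ∀ v ∈ C, Module.finrank K ↥v = 2) :
    Function.Surjective (planeMk C) := by
  intro v
  have hv := hC v.1 v.2
  have : Module.Finite K v.1 := Module.finite_of_finrank_pos (by omega)
  let b := Module.finBasisOfFinrankEq K v.1 hv
  have hb : ![(b 0 : L), b 1] = v.1.subtype ∘ b := by
    funext i; fin_cases i <;> rfl
  have hspan : Submodule.span K (Set.range ![(b 0 : L), b 1]) = v.1 := by
    rw [hb, Set.range_comp, Submodule.span_image, b.span_eq, Submodule.map_top,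
      Submodule.range_subtype]
  refine ⟨⟨(b 0, b 1), ?_, ?_⟩, Subtype.ext hspan⟩
  · change LinearIndependent K ![(b 0 : L), b 1]
    rw [hb]
    exact b.linearIndependent.map' _ (Submodule.ker_subtype _)
  · exact hspan.symm ▸ v.2

end Planes

end ElemAb

open ElemAb

/-- Let `X ⊆ Gr₂(g)^{V(g)}` be closed, `V_X = ⋃_{v ∈ X} v`, and let
`φ : P(V_X) → P^m` be a morphism of varieties.  Then the map `deg_φ : X → ℕ`,
`v ↦ deg (φ|_{P(v)})`, is locally constant; and if `X` is connected, it is constant. -/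
theorem statement14
    (p : ℕ) (hp : p.Prime) (hp3 : 3 ≤ p)
    (k : Type) [Field k] [IsAlgClosed k] [CharP k p]
    (L : Type) [LieRing L] [LieAlgebra k L] [FiniteDimensional k L]
    (P : pStructure p k L)
    (X : Set ↥P.gr2V) (hX : @IsClosed _ (planeTop P.gr2V) X)
    (m : ℕ)
    (φ : projOf k (⋃ v ∈ X, ((v : Submodule k L) : Set L)) →
      Projectivization k (Fin (m + 1) → k))
    (hφ : IsMorphismOn (⋃ v ∈ X, ((v : Submodule k L) : Set L)) m φ) :
    -- (1) `deg_φ` is locally constant on `X`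
    (@IsLocallyConstant ↥X ℕ (TopologicalSpace.induced Subtype.val (planeTop P.gr2V))
      (fun v => planeDeg m φ (v.1 : Submodule k L))) ∧
    -- (2) if `X` is connected then `deg_φ` is constant
    (@IsPreconnected _ (planeTop P.gr2V) X →
      ∀ v w : ↥X, planeDeg m φ (v.1 : Submodule k L) = planeDeg m φ (w.1 : Submodule k L)) := by
  have hinf : Infinite k := inferInstance
  obtain ⟨D, J, _, M, hM, hcov⟩ := hφ.exists_global_system
  let _ := planeTop P.gr2V
  have hvS : ∀ v : ↥P.gr2V, v ∈ X →
      ((v : Submodule k L) : Set L) ⊆ ⋃ v ∈ X, ((v : Submodule k L) : Set L) :=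
    fun v hv => Set.subset_biUnion_of_mem (u := fun v : ↥P.gr2V => ((v : Submodule k L) : Set L)) hv
  have hpoly : ∀ (j : J) (l : Fin (m + 1)) (s : k),
      (fun z : L × L => polyEval (M j l) (s • z.1 + z.2)) ∈ polyFuns k (L × L) := fun j l s =>
    polyEval_linear_mem_polyFuns (M j l) (s • LinearMap.fst k L L + LinearMap.snd k L L)
  have hlt : ∀ n, IsClosed (X ∩ {v | planeDeg m φ (v : Submodule k L) < n}) := by
    intro n
    refine isClosed_inter_planeTop hX (isClosed_exists_cross_eq
      (fun j l s (z : L × L) => polyEval (M j l) (s • z.1 + z.2)) hpoly n) ?_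
    intro z hz
    rw [Set.mem_ofPred_eq, Set.mem_ofPred_eq]
    exact planeDeg_lt_iff (u := z.1.1) (w := z.1.2) (v := (planeMk P.gr2V z).1) hM hcov
      (hvS (planeMk P.gr2V z) hz) z.2.1 rfl n
  have hgt : ∀ n, IsClosed (X ∩ {v | D - planeDeg m φ (v : Submodule k L) < n}) := by
    intro n
    refine isClosed_inter_planeTop hX (isClosed_exists_cross_eq
      (fun l j s (z : L × L) => polyEval (M j l) (s • z.1 + z.2)) (fun l j s => hpoly j l s) n) ?_
    intro z hz
    rw [Set.mem_ofPred_eq, Set.mem_ofPred_eq]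
    exact sub_planeDeg_lt_iff (u := z.1.1) (w := z.1.2) (v := (planeMk P.gr2V z).1) hM hcov
      (hvS (planeMk P.gr2V z) hz) z.2.1 rfl n
  have hle : ∀ v ∈ X, planeDeg m φ (v : Submodule k L) ≤ D := fun v hv => by
    obtain ⟨z, rfl⟩ := planeMk_surjective (fun v hv => hv.1) v
    obtain ⟨e', g, h, he', -⟩ := exists_planeDeg_factorization (u := z.1.1) (w := z.1.2)
      (v := (planeMk P.gr2V z).1) hM hcov (hvS (planeMk P.gr2V z) hv) z.2.1 rfl
    exact he' ▸ Nat.le_add_right _ _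
  have hloc : IsLocallyConstant fun v : ↥X => planeDeg m φ (v.1 : Submodule k L) := by
    rw [IsLocallyConstant.iff_isOpen_fiber]
    intro y
    rw [← isClosed_compl_iff]
    convert ((hlt y).preimage continuous_subtype_val).union
      ((hgt (D - y)).preimage continuous_subtype_val) using 1
    ext v
    have := hle v.1 v.2
    simp only [Set.mem_compl_iff, Set.mem_preimage, Set.mem_singleton_iff, Set.mem_union,
      Set.mem_inter_iff, v.2, true_and, Set.mem_ofPred_eq]
    omega
  refine ⟨hloc, fun hconn v w => ?_⟩
  have := isPreconnected_iff_preconnectedSpace.1 hconn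
  exact hloc.apply_eq_of_preconnectedSpace v w
end
end

section
/- Let e_r be the r-dimensional elementary abelian restricted Lie algebra over k, j ∈ {1,…,p−1}, and let M be a U₀(e_r)-module with the equal j-images property. Then: (1) the submodule Rad^{j−1}(M) has the equal images property (equal 1-images); (2) M has the equal ℓ-images property for every ℓ ∈ {j, j+1, …, p−1}; (3) the Loewy length of M satisfies ℓℓ(M) ≤ p; (4) if r ≥ 2, there exist natural numbers c_{j+1}, …, c_{ℓℓ(M)} ∈ ℕ and functions a_i : e_r\{0} → ℕ₀ such that for every x ∈ e_r\{0} the local Jordan type of M at x is Jt(M,x) = ⊕_{i=1}^{j} a_i(x)[i] ⊕ ⊕_{i=j+1}^{ℓℓ(M)} c_i[i]. -/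
noncomputable section

namespace ElemAb

variable (p : ℕ) (k : Type) [Field k]

variable (L : Type) [LieRing L] [LieAlgebra k L]

variable {p k L}

section Rep

variable (P : pStructure p k L) (M : Type) [AddCommGroup M] [Module k M]

/-- A module over the restricted enveloping algebra `U₀(g)`, given as a representation of the
restricted Lie algebra: brackets go to commutators of operators and the `p`-map goes to the
`p`-th power of operators. -/
structure RestRep : Type where
  ρ : L →ₗ[k] Module.End k M
  map_bracket : ∀ x y : L, ρ ⁅x, y⁆ = ρ x * ρ y - ρ y * ρ x
  map_pmap : ∀ x : L, ρ (P.pmap x) = (ρ x) ^ p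

variable {P M}

/-- `M` has constant `j`-rank `r`:  all operators `x_M^j`, for `x ∈ V(g)∖{0}`, have rank `r`. -/
def RestRep.HasConstRank (R : RestRep P M) (j r : ℕ) : Prop :=
  ∀ x ∈ P.null, x ≠ 0 → Module.finrank k ↥(LinearMap.range ((R.ρ x) ^ j)) = r

/-- The radical series `Rad^s(M) = J^s·M` of `M` over `U₀(g)` for `g` unipotent
(e.g. elementary abelian), where `J` is the ideal generated by the action of `g`. -/
def RestRep.radPow (R : RestRep P M) : ℕ → Submodule k M
  | 0 => ⊤
  | s + 1 => ⨆ x : L, Submodule.map (R.ρ x) (R.radPow s)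

/-- The Loewy length of `M`. -/
noncomputable def RestRep.loewy (R : RestRep P M) : ℕ := sInf {s | R.radPow s = ⊥}

end Rep

section Jordan

variable {V : Type} [AddCommGroup V] [Module k V]

/-- The multiplicity of the Jordan block `[i]` in the Jordan type of a (nilpotent)
endomorphism `f`. -/
noncomputable def jordanMult (f : Module.End k V) (i : ℕ) : ℕ :=
  Module.finrank k ↥(LinearMap.ker f ⊓ LinearMap.range (f ^ (i - 1))) -
  Module.finrank k ↥(LinearMap.ker f ⊓ LinearMap.range (f ^ i))

end Jordan
end ElemAb

namespace ElemAb

section Polarization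

variable {k M : Type} [Field k] [AddCommGroup M] [Module k M]

/-- If all values of a vector-valued polynomial over an infinite field lie in a subspace, then so
do its coefficients. -/
theorem coeff_mem_of_forall_sum_smul_mem [Infinite k] (N : Submodule k M) (n : ℕ) (v : ℕ → M)
    (h : ∀ t : k, ∑ i ∈ Finset.range n, t ^ i • v i ∈ N) {i : ℕ} (hi : i < n) : v i ∈ N := by
  by_contra hv
  obtain ⟨φ, hφ, hN⟩ := N.exists_le_ker_of_notMem hv
  have hq : (∑ i ∈ Finset.range n, Polynomial.monomial i (φ (v i))) = 0 := by
    refine Polynomial.funext fun t => ?_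
    have := hN (h t)
    simp only [LinearMap.mem_ker, map_sum, map_smul, smul_eq_mul] at this
    simpa [Polynomial.eval_finsetSum, mul_comm] using this
  have hc := congrArg (fun q => Polynomial.coeff q i) hq
  simp only [Polynomial.finsetSum_coeff, Polynomial.coeff_monomial, Polynomial.coeff_zero] at hc
  rw [Finset.sum_ite_eq' (Finset.range n) i, if_pos (Finset.mem_range.2 hi)] at hc
  exact hφ hc

/-- Partial polarization: a subspace containing `(f + t g)^(n+1) z` for all `t` contains
`f^n (g z)`, provided `n + 1` is invertible. -/
theorem pow_apply_mem_of_forall_add_smul_pow_mem [Infinite k] (N : Submodule k M)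
    {f g : Module.End k M} (hfg : Commute f g) {n : ℕ} (hn : ((n + 1 : ℕ) : k) ≠ 0) {z : M}
    (h : ∀ t : k, ((f + t • g) ^ (n + 1)) z ∈ N) : (f ^ n) (g z) ∈ N := by
  have key := coeff_mem_of_forall_sum_smul_mem N (n + 1 + 1)
    (fun i => (((n + 1).choose i : ℕ) : k) • (g ^ i) ((f ^ (n + 1 - i)) z)) (fun t => by
      have ht := h t
      rw [add_comm f, (hfg.symm.smul_left t).add_pow, LinearMap.sum_apply] at ht
      convert ht using 2 with i
      simp [smul_pow, Nat.cast_smul_eq_nsmul, Module.End.natCast_apply]) (i := 1) (by omega)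
  simp only [Nat.choose_one_right, pow_one, Nat.add_sub_cancel] at key
  have hc : g ((f ^ n) z) = (f ^ n) (g z) := by
    rw [← Module.End.mul_apply, ← Module.End.mul_apply, (hfg.pow_left n).eq]
  rw [hc] at key
  exact (N.smul_mem_iff hn).1 key

end Polarization

section Pencil

variable {k M : Type} [Field k] [AddCommGroup M] [Module k M]

/-- An operator mapping `A` onto `B` and `B` onto `C` induces a bijection `A/B → B/C` as soon as
`dim A/B ≤ dim B/C`. -/
theorem exists_bijective_quotient_map [FiniteDimensional k M] {A B C : Submodule k M}
    {h : Module.End k M} (hBA : B ≤ A) (hCB : C ≤ B) (hA : A.map h = B) (hB : B.map h = C)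
    (hle : Module.finrank k A + Module.finrank k C ≤ 2 * Module.finrank k B) :
    ∃ F : (A ⧸ B.submoduleOf A) →ₗ[k] (B ⧸ C.submoduleOf B),
      Function.Bijective F ∧ ∀ a : A, ∀ b : B, (b : M) = h a →
        F (Submodule.Quotient.mk a) = Submodule.Quotient.mk b := by
  have hV := (B.submoduleOf A).finrank_quotient_add_finrank
  have hW := (C.submoduleOf B).finrank_quotient_add_finrank
  rw [(Submodule.submoduleOfEquivOfLe hBA).finrank_eq] at hV
  rw [(Submodule.submoduleOfEquivOfLe hCB).finrank_eq] at hW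
  have hAB : ∀ a ∈ A, h a ∈ B := fun a ha => hA ▸ Submodule.mem_map_of_mem ha
  have hBC : B.submoduleOf A ≤ (C.submoduleOf B).comap (h.restrict hAB) := by
    intro a ha
    change h a ∈ C
    rw [← hB]
    exact Submodule.mem_map_of_mem ha
  have hs : Function.Surjective (Submodule.mapQ _ _ (h.restrict hAB) hBC) := by
    intro w
    obtain ⟨⟨b, hb⟩, rfl⟩ := Submodule.Quotient.mk_surjective _ w
    obtain ⟨a, ha, rfl⟩ := hA.symm ▸ hb
    exact ⟨Submodule.Quotient.mk ⟨a, ha⟩, rfl⟩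
  refine ⟨Submodule.mapQ _ _ (h.restrict hAB) hBC,
    ⟨(LinearMap.injective_iff_surjective_of_finrank_eq_finrank ?_).2 hs, hs⟩, fun a b hb => ?_⟩
  · have := LinearMap.finrank_le_finrank_of_surjective hs
    omega
  · rw [Submodule.mapQ_apply]
    congr 1
    exact Subtype.ext hb.symm

/-- Over an algebraically closed field, if a pencil of operators maps `A` onto `B` and `B` onto `C`
with `B` a proper subspace of `A`, then the codimensions strictly decrease. -/
theorem two_mul_finrank_lt_of_pencil [IsAlgClosed k] [FiniteDimensional k M]
    {A B C : Submodule k M} {f g : Module.End k M} (hBA : B < A) (hCB : C ≤ B)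
    (hfA : A.map f = B) (hfB : B.map f = C) (hA : ∀ t : k, A.map (g - t • f) = B)
    (hB : ∀ t : k, B.map (g - t • f) = C) :
    2 * Module.finrank k B < Module.finrank k A + Module.finrank k C := by
  by_contra! hle
  have hgA := hA 0
  have hgB := hB 0
  rw [zero_smul, sub_zero] at hgA hgB
  have hAB : ∀ {h : Module.End k M}, A.map h = B → ∀ a : A, h a ∈ B :=
    fun e a => e ▸ Submodule.mem_map_of_mem a.2
  obtain ⟨F, hF, hFa⟩ := exists_bijective_quotient_map hBA.le hCB hfA hfB hle
  obtain ⟨G, -, hGa⟩ := exists_bijective_quotient_map hBA.le hCB hgA hgB hle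
  have : Nontrivial (A ⧸ B.submoduleOf A) := by
    rw [Submodule.Quotient.nontrivial_iff, Ne, Submodule.submoduleOf_eq_top]
    exact not_le_of_gt hBA
  let e := LinearEquiv.ofBijective F hF
  obtain ⟨t, ht⟩ := Module.End.exists_eigenvalue (e.symm.toLinearMap ∘ₗ G)
  obtain ⟨v, hv⟩ := ht.exists_hasEigenvector
  have hGF : G v = t • F v := by
    have h1 : e.symm (G v) = t • v := hv.apply_eq_smul
    rw [LinearEquiv.symm_apply_eq, map_smul] at h1
    exact h1
  obtain ⟨H, hH, hHa⟩ := exists_bijective_quotient_map hBA.le hCB (hA t) (hB t) hle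
  refine hv.2 (hH.1 ?_)
  obtain ⟨a, rfl⟩ := Submodule.Quotient.mk_surjective _ v
  rw [hFa a ⟨f a, hAB hfA a⟩ rfl, hGa a ⟨g a, hAB hgA a⟩ rfl] at hGF
  rw [hHa a (⟨g a, hAB hgA a⟩ - t • ⟨f a, hAB hfA a⟩) rfl, Submodule.Quotient.mk_sub,
    Submodule.Quotient.mk_smul, hGF, sub_self, map_zero]

/-- The multiplicity of a Jordan block in terms of ranks of powers. -/
theorem jordanMult_succ [FiniteDimensional k M] (f : Module.End k M) (i : ℕ) :
    jordanMult f (i + 1) =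
      (Module.finrank k (LinearMap.range (f ^ i)) -
        Module.finrank k (LinearMap.range (f ^ (i + 1)))) -
      (Module.finrank k (LinearMap.range (f ^ (i + 1))) -
        Module.finrank k (LinearMap.range (f ^ (i + 2)))) := by
  have key : ∀ n : ℕ, Module.finrank k ↥(LinearMap.ker f ⊓ LinearMap.range (f ^ n)) =
      Module.finrank k (LinearMap.range (f ^ n)) -
        Module.finrank k (LinearMap.range (f ^ (n + 1))) := by
    intro n
    have h := (f.domRestrict (LinearMap.range (f ^ n))).finrank_range_add_finrank_ker
    rw [LinearMap.range_domRestrict, LinearMap.ker_domRestrict,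
      ← Submodule.finrank_map_subtype_eq, Submodule.map_comap_subtype, inf_comm,
      ← LinearMap.range_comp, ← Module.End.mul_eq_comp, ← pow_succ'] at h
    omega
  rw [jordanMult, Nat.add_sub_cancel, key, key]

end Pencil

section Radical

variable {p : ℕ} {k : Type} [Field k] {L : Type} [LieRing L] [LieAlgebra k L]
  {P : pStructure p k L} {M : Type} [AddCommGroup M] [Module k M] (R : RestRep P M)

theorem RestRep.commute (hab : ∀ x y : L, ⁅x, y⁆ = (0 : L)) (x y : L) :
    Commute (R.ρ x) (R.ρ y) := by
  have h := R.map_bracket x y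
  rw [hab, map_zero] at h
  exact (sub_eq_zero.1 h.symm)

theorem RestRep.map_radPow_le (x : L) (s : ℕ) :
    (R.radPow s).map (R.ρ x) ≤ R.radPow (s + 1) :=
  le_iSup (fun y => (R.radPow s).map (R.ρ y)) x

theorem RestRep.range_pow_succ (x : L) (s : ℕ) :
    LinearMap.range (R.ρ x ^ (s + 1)) = (LinearMap.range (R.ρ x ^ s)).map (R.ρ x) := by
  rw [pow_succ', Module.End.mul_eq_comp, LinearMap.range_comp]

theorem RestRep.range_pow_le_radPow (x : L) (s : ℕ) :
    LinearMap.range (R.ρ x ^ s) ≤ R.radPow s := by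
  induction s with
  | zero => exact le_top
  | succ s ih =>
    rw [R.range_pow_succ]
    exact (Submodule.map_mono ih).trans (R.map_radPow_le x s)

/-- A subspace containing the images of all `j`-th powers contains the image of
`x^(j - m) Rad^m(M)`, if `j < p`. -/
theorem RestRep.pow_apply_mem_of_mem_radPow [CharP k p] [Infinite k]
    (hab : ∀ x y : L, ⁅x, y⁆ = (0 : L)) {j : ℕ} (hjp : j < p) (N : Submodule k M)
    (hN : ∀ x : L, LinearMap.range (R.ρ x ^ j) ≤ N) (m n : ℕ) (hmn : m + n = j) (x : L) (z : M)
    (hz : z ∈ R.radPow m) : (R.ρ x ^ n) z ∈ N := by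
  induction m generalizing n x z with
  | zero =>
    obtain rfl : n = j := by omega
    exact hN x (LinearMap.mem_range_self _ z)
  | succ m ih =>
    suffices R.radPow (m + 1) ≤ N.comap (R.ρ x ^ n) from this hz
    refine iSup_le fun y => Submodule.map_le_iff_le_comap.2 fun w hw => ?_
    refine pow_apply_mem_of_forall_add_smul_pow_mem N (R.commute hab x y) ?_ fun t => ?_
    · rw [Ne, CharP.cast_eq_zero_iff k p]
      exact Nat.not_dvd_of_pos_of_lt n.succ_pos (by omega)
    · have := ih (n + 1) (by omega) (x + t • y) w hw
      rwa [map_add, map_smul] at this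

/-- For a module with equal `j`-images, all radicals from degree `j` on are images of powers. -/
theorem RestRep.radPow_eq_range_pow [CharP k p] [Infinite k]
    (hab : ∀ x y : L, ⁅x, y⁆ = (0 : L)) {j : ℕ} (hj1 : 1 ≤ j) (hjp : j < p)
    (heqi : ∀ x y : L, x ≠ 0 → y ≠ 0 →
      LinearMap.range (R.ρ x ^ j) = LinearMap.range (R.ρ y ^ j))
    {s : ℕ} (hs : j ≤ s) {x : L} (hx : x ≠ 0) :
    R.radPow s = LinearMap.range (R.ρ x ^ s) := by
  refine le_antisymm ?_ (R.range_pow_le_radPow x s)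
  induction s, hs using Nat.le_induction with
  | base =>
    intro z hz
    refine R.pow_apply_mem_of_mem_radPow hab hjp _ (fun y => ?_) j 0 (add_zero j) x z hz
    by_cases hy : y = 0
    · rw [hy, map_zero, zero_pow (by omega), LinearMap.range_zero]
      exact bot_le
    · exact (heqi y x hy hx).le
  | succ s hs ih =>
    refine iSup_le fun y => ?_
    obtain ⟨s, rfl⟩ : ∃ t, s = t + 1 := ⟨s - 1, by omega⟩
    calc (R.radPow (s + 1)).map (R.ρ y)
        ≤ (LinearMap.range (R.ρ x ^ (s + 1))).map (R.ρ y) := Submodule.map_mono ih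
      _ = ((LinearMap.range (R.ρ x ^ s)).map (R.ρ y)).map (R.ρ x) := by
        rw [R.range_pow_succ, ← Submodule.map_comp, ← Submodule.map_comp,
          ← Module.End.mul_eq_comp, ← Module.End.mul_eq_comp, (R.commute hab x y).eq]
      _ ≤ (R.radPow (s + 1)).map (R.ρ x) := Submodule.map_mono
        ((Submodule.map_mono (R.range_pow_le_radPow x s)).trans (R.map_radPow_le y s))
      _ ≤ (LinearMap.range (R.ρ x ^ (s + 1))).map (R.ρ x) := Submodule.map_mono ih
      _ = LinearMap.range (R.ρ x ^ (s + 1 + 1)) := (R.range_pow_succ x (s + 1)).symm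

end Radical

end ElemAb

open ElemAb

/-- Properties of `U₀(e_r)`-modules with the equal `j`-images property over
the `r`-dimensional elementary abelian restricted Lie algebra `e_r`. -/
theorem statement18
    (p : ℕ) (hp : p.Prime) (hp3 : 3 ≤ p)
    (k : Type) [Field k] [IsAlgClosed k] [CharP k p]
    (r : ℕ)
    (L : Type) [LieRing L] [LieAlgebra k L] [FiniteDimensional k L]
    (P : pStructure p k L)
    -- `L = e_r` is the `r`-dimensional elementary abelian restricted Lie algebra
    (hdim : Module.finrank k L = r)
    (hab : ∀ x y : L, ⁅x, y⁆ = (0 : L)) (htriv : ∀ x : L, P.pmap x = 0)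
    (j : ℕ) (hj1 : 1 ≤ j) (hjp : j ≤ p - 1)
    (M : Type) [AddCommGroup M] [Module k M] [FiniteDimensional k M]
    (R : RestRep P M)
    -- `M` has the equal `j`-images property
    (heqi : ∀ x y : L, x ≠ 0 → y ≠ 0 →
      LinearMap.range ((R.ρ x) ^ j) = LinearMap.range ((R.ρ y) ^ j)) :
    -- (1) `Rad^{j-1}(M)` has the equal images property
    (∀ x y : L, x ≠ 0 → y ≠ 0 →
      Submodule.map (R.ρ x) (R.radPow (j - 1)) = Submodule.map (R.ρ y) (R.radPow (j - 1))) ∧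
    -- (2) `M` has the equal `ℓ`-images property for all `ℓ ∈ {j, …, p-1}`
    (∀ ℓ : ℕ, j ≤ ℓ → ℓ ≤ p - 1 → ∀ x y : L, x ≠ 0 → y ≠ 0 →
      LinearMap.range ((R.ρ x) ^ ℓ) = LinearMap.range ((R.ρ y) ^ ℓ)) ∧
    -- (3) the Loewy length of `M` is at most `p`
    (R.radPow p = ⊥) ∧
    -- (4) uniform Jordan block multiplicities `c_i` in degrees `i > j`
    (2 ≤ r → ∃ c : ℕ → ℕ,
      (∀ i : ℕ, j + 1 ≤ i → i ≤ R.loewy → 0 < c i) ∧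
      ∀ x : L, x ≠ 0 → ∀ i : ℕ, j + 1 ≤ i → i ≤ R.loewy →
        jordanMult (R.ρ x) i = c i) := by
  have hinf : Infinite k := IsAlgClosed.instInfinite
  have hjp' : j < p := by omega
  have hrad : ∀ {s : ℕ}, j ≤ s → ∀ {x : L}, x ≠ 0 →
      R.radPow s = LinearMap.range (R.ρ x ^ s) :=
    fun hs _ hx => R.radPow_eq_range_pow hab hj1 hjp' heqi hs hx
  have hmap : ∀ {s : ℕ}, j ≤ s → ∀ {x : L}, x ≠ 0 →
      (R.radPow s).map (R.ρ x) = R.radPow (s + 1) := by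
    intro s hs x hx
    rw [hrad hs hx, hrad (by omega : j ≤ s + 1) hx, R.range_pow_succ]
  have hpow : ∀ x : L, R.ρ x ^ p = 0 := fun x => by rw [← R.map_pmap, htriv, map_zero]
  have hzero : R.radPow p = ⊥ := by
    by_cases hL : ∃ x : L, x ≠ 0
    · obtain ⟨x, hx⟩ := hL
      rw [hrad hjp'.le hx, hpow, LinearMap.range_zero]
    · push Not at hL
      obtain ⟨q, rfl⟩ : ∃ q, p = q + 1 := ⟨p - 1, by omega⟩
      refine eq_bot_iff.2 (iSup_le fun x => ?_)
      rw [hL x, map_zero, Submodule.map_zero]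
  refine ⟨?_, fun ℓ hℓ _ x y hx hy => (hrad hℓ hx).symm.trans (hrad hℓ hy), hzero, ?_⟩
  · have hj : ∀ x : L, x ≠ 0 → (R.radPow (j - 1)).map (R.ρ x) = R.radPow j := by
      intro x hx
      obtain ⟨i, rfl⟩ : ∃ i, j = i + 1 := ⟨j - 1, by omega⟩
      refine le_antisymm (R.map_radPow_le x i) ?_
      rw [hrad le_rfl hx, R.range_pow_succ]
      exact Submodule.map_mono (R.range_pow_le_radPow x i)
    exact fun x y hx hy => (hj x hx).trans (hj y hy).symm
  · intro hr
    have : Nontrivial L := Module.nontrivial_of_finrank_pos (R := k) (by omega)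
    obtain ⟨x, hx⟩ := exists_ne (0 : L)
    obtain ⟨y, hxy⟩ := exists_linearIndependent_pair_of_one_lt_finrank (R := k) (by omega) hx
    have hpencil : ∀ t : k, y - t • x ≠ 0 := by
      intro t ht
      have := LinearIndependent.pair_iff.1 hxy (-t) 1 (by rw [← ht]; module)
      exact one_ne_zero this.2
    refine ⟨jordanMult (R.ρ x), fun i hi hil => ?_, fun z hz i hi _ => ?_⟩
    · obtain ⟨i, rfl⟩ : ∃ n, i = n + 1 := ⟨i - 1, by omega⟩
      have hij : j ≤ i := by omega
      have hne : R.radPow i ≠ ⊥ := Nat.notMem_of_lt_sInf (s := {s | R.radPow s = ⊥}) hil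
      have hanti : ∀ s, R.radPow (s + 1) ≤ R.radPow s := by
        intro s
        induction s with
        | zero => exact le_top
        | succ s ih => exact iSup_mono fun w => Submodule.map_mono ih
      have hlt : R.radPow (i + 1) < R.radPow i := by
        refine lt_of_le_of_ne (hanti i) fun heq => hne ?_
        have hst : ∀ n, R.radPow (i + n) = R.radPow i := by
          intro n
          induction n with
          | zero => rfl
          | succ n ih => rw [← add_assoc, ← hmap (by omega) hx, ih, hmap hij hx, heq]
        rw [← hst p, hrad (by omega) hx, pow_add, hpow, mul_zero, LinearMap.range_zero]
      have hdim := two_mul_finrank_lt_of_pencil (C := R.radPow (i + 2))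
        (f := R.ρ x) (g := R.ρ y) hlt (hanti (i + 1))
        (hmap hij hx) (hmap (by omega) hx)
        (fun t => by rw [← map_smul, ← map_sub]; exact hmap hij (hpencil t))
        (fun t => by rw [← map_smul, ← map_sub]; exact hmap (by omega) (hpencil t))
      have hle := Submodule.finrank_mono (s := R.radPow (i + 2)) (hanti (i + 1))
      rw [jordanMult_succ, ← hrad hij hx, ← hrad (by omega : j ≤ i + 1) hx,
        ← hrad (by omega : j ≤ i + 2) hx]
      omega
    · obtain ⟨i, rfl⟩ : ∃ n, i = n + 1 := ⟨i - 1, by omega⟩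
      simp only [jordanMult_succ]
      rw [← hrad (by omega : j ≤ i) hx, ← hrad (by omega : j ≤ i + 1) hx,
        ← hrad (by omega : j ≤ i + 2) hx, ← hrad (by omega : j ≤ i) hz,
        ← hrad (by omega : j ≤ i + 1) hz, ← hrad (by omega : j ≤ i + 2) hz]
end
end
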